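/- For integers k ≥ 1 and 1 ≤ a ≤ k: Σ_{n≥0} \overline{U}_{2k,2a−1}(n) q^n = Σ_{n≥0} \overline{U}_{2k,2a}(n) q^n = (−q^2;q^2)_∞^2 (q^{2a}, q^{4k−2a}, q^{4k}; q^{4k})_∞ / (q^2;q^2)_∞, where \overline{U}_{2k,b}(n) counts overpartitions of n satisfying f_1 ≤ b−1+f_{1̄}, f_{2l} ≥ f_{\overline{2l}}, f_{2l−1}+f_{\overline{2l−1}} ≡ 0 (mod 2), and f_l+f_{l̄}+f_{l+1} ≤ 2k−1+f_{\overline{l+1}}. -/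

import Mathlib

/-- An overpartition recorded by a pair of multiplicity functions:
`p.1 i` is the number of non-overlined occurrences of the part `i` and
`p.2 i ∈ {0, 1}` is the number of overlined occurrences of `i`.
There are no parts equal to `0`. -/
def IsOverPtn (p : (ℕ →₀ ℕ) × (ℕ →₀ ℕ)) : Prop :=
  p.1 0 = 0 ∧ p.2 0 = 0 ∧ ∀ i, p.2 i ≤ 1

/-- The number of parts of an overpartition. -/
def opParts (p : (ℕ →₀ ℕ) × (ℕ →₀ ℕ)) : ℕ :=
  (p.1.sum fun _ v => v) + (p.2.sum fun _ v => v)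

/-- The weight (number partitioned) of an overpartition. -/
def opWt (p : (ℕ →₀ ℕ) × (ℕ →₀ ℕ)) : ℕ :=
  (p.1.sum fun i v => i * v) + (p.2.sum fun i v => i * v)

/-- Conditions (i)-(iv) of Definition 1.6 (Kursungoz–Zadehdabbagh), with modulus `d`,
first index `N = dk + e` and second index `M = da + f`: writing `f_i = p.1 i`,
`f_{ī} = p.2 i`,
(i) `f_1 ≤ M - 1 + (d-1) f_{1̄}`;
(ii) `f_{2l-1} ≥ (d-1) f_{\overline{2l-1}}`;
(iii) `f_{2l} + f_{\overline{2l}} ≡ 0 (mod d)`;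
(iv) `f_l + f_{l̄} + f_{l+1} ≤ N - 1 + (d-1) f_{\overline{l+1}}` for all `l ≥ 1`. -/
def uCond (d N M : ℕ) (p : (ℕ →₀ ℕ) × (ℕ →₀ ℕ)) : Prop :=
  p.1 1 + 1 ≤ M + (d - 1) * p.2 1 ∧
  (∀ l : ℕ, (d - 1) * p.2 (2 * l + 1) ≤ p.1 (2 * l + 1)) ∧
  (∀ l : ℕ, d ∣ p.1 (2 * l + 2) + p.2 (2 * l + 2)) ∧
  (∀ l : ℕ, 1 ≤ l → p.1 l + p.2 l + p.1 (l + 1) + 1 ≤ N + (d - 1) * p.2 (l + 1))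

/-- Conditions (ī)-(iv̄): as `uCond` with the parity roles of odd and even parts
swapped in the second and third conditions. -/
def ubarCond (d N M : ℕ) (p : (ℕ →₀ ℕ) × (ℕ →₀ ℕ)) : Prop :=
  p.1 1 + 1 ≤ M + (d - 1) * p.2 1 ∧
  (∀ l : ℕ, (d - 1) * p.2 (2 * l + 2) ≤ p.1 (2 * l + 2)) ∧
  (∀ l : ℕ, d ∣ p.1 (2 * l + 1) + p.2 (2 * l + 1)) ∧
  (∀ l : ℕ, 1 ≤ l → p.1 l + p.2 l + p.1 (l + 1) + 1 ≤ N + (d - 1) * p.2 (l + 1))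

/-- `u_{N, M}(m, n)`: the number of overpartitions of `n` into `m` parts
satisfying conditions (i)-(iv). -/
noncomputable def uCount (d N M m n : ℕ) : ℕ :=
  Set.ncard {p : (ℕ →₀ ℕ) × (ℕ →₀ ℕ) |
    IsOverPtn p ∧ opParts p = m ∧ opWt p = n ∧ uCond d N M p}

/-- `ū_{N, M}(m, n)`: the number of overpartitions of `n` into `m` parts
satisfying conditions (ī)-(iv̄). -/
noncomputable def ubarCount (d N M m n : ℕ) : ℕ :=
  Set.ncard {p : (ℕ →₀ ℕ) × (ℕ →₀ ℕ) |
    IsOverPtn p ∧ opParts p = m ∧ opWt p = n ∧ ubarCond d N M p}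

/-- The two-variable generating function `U_{N,M}(x) = Σ u_{N,M}(m,n) x^m q^n`. -/
noncomputable def Ugf (d N M : ℕ) (x q : ℂ) : ℂ :=
  ∑' mn : ℕ × ℕ, (uCount d N M mn.1 mn.2 : ℂ) * x ^ mn.1 * q ^ mn.2

/-- The two-variable generating function `Ū_{N,M}(x) = Σ ū_{N,M}(m,n) x^m q^n`. -/
noncomputable def UbarGf (d N M : ℕ) (x q : ℂ) : ℂ :=
  ∑' mn : ℕ × ℕ, (ubarCount d N M mn.1 mn.2 : ℂ) * x ^ mn.1 * q ^ mn.2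

/-- The infinite q-Pochhammer symbol `(a; q)_∞ = ∏_{j ≥ 0} (1 - a q^j)`. -/
noncomputable def qPochInf (a q : ℂ) : ℂ := ∏' j : ℕ, (1 - a * q ^ j)

/-- The finite q-Pochhammer symbol `(a; q)_n = ∏_{j=0}^{n-1} (1 - a q^j)`. -/
noncomputable def qPochFin (a q : ℂ) (n : ℕ) : ℂ := ∏ j ∈ Finset.range n, (1 - a * q ^ j)

open Filter Topology Finset

section InfiniteProducts

lemma summable_norm_mul_pow (a : ℂ) {q : ℂ} (hq : ‖q‖ < 1) :
    Summable fun j : ℕ => ‖-(a * q ^ j)‖ := by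
  simp only [norm_neg, norm_mul, norm_pow]
  exact (summable_geometric_of_lt_one (norm_nonneg q) hq).mul_left _

lemma tendsto_qPochFin (a : ℂ) {q : ℂ} (hq : ‖q‖ < 1) :
    Tendsto (qPochFin a q) atTop (𝓝 (qPochInf a q)) := by
  have h := (multipliable_one_add_of_summable (summable_norm_mul_pow a hq)).hasProd.tendsto_prod_nat
  simp only [← sub_eq_add_neg] at h
  exact h

lemma qPochInf_ne_zero {a q : ℂ} (hq : ‖q‖ < 1) (h : ∀ j : ℕ, 1 - a * q ^ j ≠ 0) :
    qPochInf a q ≠ 0 := by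
  have h := tprod_one_add_ne_zero_of_summable (f := fun j : ℕ => -(a * q ^ j))
    (by simpa only [← sub_eq_add_neg] using h) (summable_norm_mul_pow a hq)
  simp only [← sub_eq_add_neg] at h
  exact h

lemma qPochFin_zero (a q : ℂ) : qPochFin a q 0 = 1 := by simp [qPochFin]

lemma qPochFin_succ (a q : ℂ) (n : ℕ) :
    qPochFin a q (n + 1) = qPochFin a q n * (1 - a * q ^ n) := by
  simp [qPochFin, prod_range_succ]

lemma one_sub_pow_ne_zero {q : ℂ} (hq : ‖q‖ < 1) (n : ℕ) : 1 - q ^ (n + 1) ≠ 0 := by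
  intro h
  have h1 : ‖q ^ (n + 1)‖ = 1 := by rw [← sub_eq_zero.1 h, norm_one]
  rw [norm_pow] at h1
  exact (pow_lt_one₀ (norm_nonneg q) hq n.succ_ne_zero).ne h1

lemma one_add_pow_ne_zero {q : ℂ} (hq : ‖q‖ < 1) (n : ℕ) : 1 + q ^ (n + 1) ≠ 0 := by
  intro h
  have h1 : ‖q ^ (n + 1)‖ = 1 := by
    rw [← norm_neg, ← eq_neg_of_add_eq_zero_left h, norm_one]
  rw [norm_pow] at h1
  exact (pow_lt_one₀ (norm_nonneg q) hq n.succ_ne_zero).ne h1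

lemma one_sub_mul_pow_ne_zero {q : ℂ} (hq : ‖q‖ < 1) (n : ℕ) : 1 - q * q ^ n ≠ 0 := by
  simpa only [pow_succ'] using one_sub_pow_ne_zero hq n

lemma one_sub_neg_mul_pow_ne_zero {q : ℂ} (hq : ‖q‖ < 1) (n : ℕ) : 1 - -q * q ^ n ≠ 0 := by
  simpa only [pow_succ', neg_mul, sub_neg_eq_add] using one_add_pow_ne_zero hq n

lemma qPochFin_self_ne_zero {q : ℂ} (hq : ‖q‖ < 1) (n : ℕ) : qPochFin q q n ≠ 0 :=
  prod_ne_zero_iff.2 fun j _ => one_sub_mul_pow_ne_zero hq j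

lemma qPochFin_neg_self_ne_zero {q : ℂ} (hq : ‖q‖ < 1) (n : ℕ) : qPochFin (-q) q n ≠ 0 :=
  prod_ne_zero_iff.2 fun j _ => one_sub_neg_mul_pow_ne_zero hq j

lemma qPochInf_self_ne_zero {q : ℂ} (hq : ‖q‖ < 1) : qPochInf q q ≠ 0 :=
  qPochInf_ne_zero hq (one_sub_mul_pow_ne_zero hq)

lemma qPochInf_neg_self_ne_zero {q : ℂ} (hq : ‖q‖ < 1) : qPochInf (-q) q ≠ 0 :=
  qPochInf_ne_zero hq (one_sub_neg_mul_pow_ne_zero hq)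

lemma exists_norm_le_of_tendsto {u : ℕ → ℂ} {x : ℂ} (h : Tendsto u atTop (𝓝 x)) :
    ∃ C : ℝ, 0 < C ∧ ∀ n, ‖u n‖ ≤ C := by
  obtain ⟨C, hC, h⟩ := (Metric.isBounded_range_of_tendsto u h).exists_pos_norm_le
  exact ⟨C, hC, fun n => h _ ⟨n, rfl⟩⟩

lemma norm_pow_le_pow {q : ℂ} (hq : ‖q‖ < 1) {m n : ℕ} (h : n ≤ m) : ‖q ^ m‖ ≤ ‖q‖ ^ n := by
  rw [norm_pow]
  exact pow_le_pow_of_le_one (norm_nonneg q) hq.le h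

end InfiniteProducts

section JacobiTripleProduct

/-- Gaussian binomial coefficients, by the `q`-Pascal recursion. -/
noncomputable def gaussBinom (P : ℂ) : ℕ → ℕ → ℂ
  | _, 0 => 1
  | 0, _ + 1 => 0
  | M + 1, r + 1 => P ^ (r + 1) * gaussBinom P M (r + 1) + gaussBinom P M r

lemma gaussBinom_zero_right (P : ℂ) (M : ℕ) : gaussBinom P M 0 = 1 := by
  cases M <;> rfl

lemma gaussBinom_eq_zero (P : ℂ) {M r : ℕ} (h : M < r) : gaussBinom P M r = 0 := by
  induction M generalizing r with
  | zero => obtain ⟨r, rfl⟩ := Nat.exists_eq_succ_of_ne_zero (Nat.pos_iff_ne_zero.1 h); rfl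
  | succ M ih =>
    obtain ⟨r, rfl⟩ := Nat.exists_eq_succ_of_ne_zero (Nat.ne_zero_of_lt h)
    rw [gaussBinom, ih (by omega), ih (by omega)]
    simp

lemma gaussBinom_add_mul (P : ℂ) (a b : ℕ) :
    gaussBinom P (a + b) a * qPochFin P P a * qPochFin P P b = qPochFin P P (a + b) := by
  induction h : a + b generalizing a b with
  | zero =>
    obtain ⟨rfl, rfl⟩ : a = 0 ∧ b = 0 := by omega
    simp [gaussBinom, qPochFin_zero]
  | succ M ih =>
    rcases a with _ | a
    · obtain rfl : b = M + 1 := by omega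
      simp [gaussBinom_zero_right, qPochFin_zero]
    rcases b with _ | b
    · obtain rfl : a = M := by omega
      have h1 := ih a 0 rfl
      rw [qPochFin_zero, mul_one] at h1 ⊢
      rw [gaussBinom, gaussBinom_eq_zero P (Nat.lt_succ_self a), qPochFin_succ]
      linear_combination (1 - P * P ^ a) * h1
    · have h1 := ih (a + 1) b (by omega)
      have h2 := ih a (b + 1) (by omega)
      obtain rfl : M = a + b + 1 := by omega
      rw [gaussBinom]
      rw [qPochFin_succ] at h1 h2
      rw [qPochFin_succ P P a, qPochFin_succ P P b, qPochFin_succ P P (a + b + 1)]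
      linear_combination P ^ (a + 1) * (1 - P * P ^ b) * h1 + (1 - P * P ^ a) * h2

lemma prod_one_add_mul_pow_eq_sum (s y : ℂ) (M : ℕ) :
    ∏ j ∈ range M, (1 + y * s ^ (2 * j + 1)) =
      ∑ r ∈ range (M + 1), gaussBinom (s ^ 2) M r * s ^ (r ^ 2) * y ^ r := by
  induction M generalizing y with
  | zero => simp [gaussBinom]
  | succ M ih =>
    have h1 : ∀ j, 1 + y * s ^ (2 * (j + 1) + 1) = 1 + y * s ^ 2 * s ^ (2 * j + 1) := by
      intro j; ring
    rw [prod_range_succ']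
    simp only [h1]
    rw [ih, sum_range_succ' _ (M + 1)]
    have h2 : ∀ r, gaussBinom (s ^ 2) (M + 1) (r + 1) * s ^ ((r + 1) ^ 2) * y ^ (r + 1) =
        gaussBinom (s ^ 2) M (r + 1) * s ^ ((r + 1) ^ 2) * (y * s ^ 2) ^ (r + 1) +
        y * s * (gaussBinom (s ^ 2) M r * s ^ (r ^ 2) * (y * s ^ 2) ^ r) := by
      intro r
      rw [gaussBinom]
      ring
    simp only [h2]
    rw [sum_add_distrib, ← mul_sum]
    have h3 := sum_range_succ' (fun r => gaussBinom (s ^ 2) M r * s ^ (r ^ 2) * (y * s ^ 2) ^ r)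
      (M + 1)
    rw [sum_range_succ, gaussBinom_eq_zero _ (Nat.lt_succ_self M)] at h3
    simp only [gaussBinom_zero_right] at h3 ⊢
    linear_combination h3

/-- A finite form of the Jacobi triple product identity. -/
lemma prod_mul_prod_eq_sum {s w : ℂ} (hs : s ≠ 0) (hw : w ≠ 0) (N : ℕ) :
    ∏ j ∈ range N, ((1 + w * s ^ (2 * j + 1)) * (1 + w⁻¹ * s ^ (2 * j + 1))) =
      ∑ n ∈ range (N + 1), gaussBinom (s ^ 2) (2 * N) (N - n) * s ^ (n ^ 2) * w⁻¹ ^ n +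
      ∑ n ∈ range N, gaussBinom (s ^ 2) (2 * N) (N + 1 + n) * s ^ ((n + 1) ^ 2) * w ^ (n + 1) := by
  have key := prod_one_add_mul_pow_eq_sum s (w * (s ^ (2 * N))⁻¹) (2 * N)
  have hsum : w ^ N * (s ^ (N ^ 2))⁻¹ ≠ 0 := by positivity
  apply mul_left_cancel₀ hsum
  have hl : ∏ j ∈ range (2 * N), (1 + w * (s ^ (2 * N))⁻¹ * s ^ (2 * j + 1)) =
      w ^ N * (s ^ (N ^ 2))⁻¹ *
      ∏ j ∈ range N, ((1 + w * s ^ (2 * j + 1)) * (1 + w⁻¹ * s ^ (2 * j + 1))) := by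
    have hc : ∏ j ∈ range N, w * (s ^ (2 * j + 1))⁻¹ = w ^ N * (s ^ (N ^ 2))⁻¹ := by
      clear key hsum
      induction N with
      | zero => simp
      | succ N ih =>
        rw [prod_range_succ, ih, show (N + 1) ^ 2 = N ^ 2 + (2 * N + 1) by ring, pow_add s,
          mul_inv, pow_succ w]
        ring
    rw [two_mul N, prod_range_add, ← prod_range_reflect, ← hc, ← prod_mul_distrib,
      ← prod_mul_distrib]
    apply prod_congr rfl
    intro j hj
    obtain ⟨d, rfl⟩ := Nat.exists_eq_add_of_lt (mem_range.1 hj)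
    rw [show j + d + 1 - 1 - j = d by omega,
      show 2 * (j + d + 1 + j) + 1 = (j + d + 1 + (j + d + 1)) + (2 * j + 1) by ring,
      pow_add s (j + d + 1 + (j + d + 1)),
      show j + d + 1 + (j + d + 1) = (2 * d + 1) + (2 * j + 1) by ring, pow_add s (2 * d + 1)]
    field_simp
    ring
  rw [← hl, key, show 2 * N + 1 = N + 1 + N by ring, sum_range_add, ← sum_range_reflect,
    mul_add, mul_sum, mul_sum]
  congr 1
  · apply sum_congr rfl
    intro n hn
    obtain ⟨d, rfl⟩ := Nat.exists_eq_add_of_le (Nat.lt_succ_iff.1 (mem_range.1 hn))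
    rw [show n + d + 1 - 1 - n = d by omega, show n + d - n = d by omega]
    rw [mul_pow, inv_pow, ← pow_mul, inv_pow, pow_add w,
      show 2 * (n + d) * d = 2 * n * d + 2 * d ^ 2 by ring,
      show (n + d) ^ 2 = n ^ 2 + 2 * n * d + d ^ 2 by ring]
    simp only [pow_add]
    field_simp
    ring
  · apply sum_congr rfl
    intro n hn
    rw [mul_pow, inv_pow, ← pow_mul,
      show 2 * N * (N + 1 + n) = 2 * N ^ 2 + 2 * N * (n + 1) by ring,
      show (N + 1 + n) ^ 2 = N ^ 2 + 2 * N * (n + 1) + (n + 1) ^ 2 by ring,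
      show N + 1 + n = N + (n + 1) by ring]
    simp only [pow_add]
    field_simp
    ring

lemma gaussBinom_eq_div {P : ℂ} (hP : ‖P‖ < 1) (a b : ℕ) :
    gaussBinom P (a + b) a = qPochFin P P (a + b) * (qPochFin P P a)⁻¹ * (qPochFin P P b)⁻¹ := by
  rw [← gaussBinom_add_mul]
  field_simp [qPochFin_self_ne_zero hP a, qPochFin_self_ne_zero hP b]

lemma tendsto_qPochFin_self_inv {P : ℂ} (hP : ‖P‖ < 1) :
    Tendsto (fun n => (qPochFin P P n)⁻¹) atTop (𝓝 (qPochInf P P)⁻¹) :=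
  (tendsto_qPochFin P hP).inv₀ (qPochInf_self_ne_zero hP)

lemma tendsto_gaussBinom {P : ℂ} (hP : ‖P‖ < 1) {a b : ℕ → ℕ} (ha : Tendsto a atTop atTop)
    (hb : Tendsto b atTop atTop) :
    Tendsto (fun N => gaussBinom P (a N + b N) (a N)) atTop (𝓝 (qPochInf P P)⁻¹) := by
  simp only [gaussBinom_eq_div hP]
  have h := (((tendsto_qPochFin P hP).comp (ha.atTop_add_atTop hb)).mul
    ((tendsto_qPochFin_self_inv hP).comp ha)).mul ((tendsto_qPochFin_self_inv hP).comp hb)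
  rw [mul_inv_cancel₀ (qPochInf_self_ne_zero hP), one_mul] at h
  exact h

lemma exists_norm_gaussBinom_le {P : ℂ} (hP : ‖P‖ < 1) :
    ∃ C : ℝ, 0 < C ∧ ∀ M r, ‖gaussBinom P M r‖ ≤ C := by
  obtain ⟨C, hC, h⟩ := exists_norm_le_of_tendsto (tendsto_qPochFin P hP)
  obtain ⟨D, hD, h'⟩ := exists_norm_le_of_tendsto (tendsto_qPochFin_self_inv hP)
  refine ⟨C * D * D, by positivity, fun M r => ?_⟩
  rcases lt_or_ge M r with hr | hr
  · rw [gaussBinom_eq_zero P hr, norm_zero]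
    positivity
  · obtain ⟨b, rfl⟩ := Nat.exists_eq_add_of_le hr
    rw [gaussBinom_eq_div hP, norm_mul, norm_mul]
    gcongr
    · exact h _
    · exact h' _
    · exact h' _

lemma norm_neg_one_pow_mul_le {q : ℂ} (hq : ‖q‖ < 1) (m : ℕ) {n e : ℕ} (h : n ≤ e) :
    ‖(-1) ^ m * q ^ e‖ ≤ ‖q‖ ^ n := by
  rw [norm_mul, norm_pow, norm_neg, norm_one, one_pow, one_mul]
  exact norm_pow_le_pow hq h

/-- The Jacobi triple product identity, in the shape
`∑ (-1)^n q^(k n^2 + (k-a) n) (1 - q^((2n+1) a)) = (q^a, q^(2k-a), q^(2k); q^(2k))_∞`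
with `k = a + d`. -/
theorem tsum_theta_eq_qPochInf {q : ℂ} (hq : ‖q‖ < 1) {a : ℕ} (ha : 1 ≤ a) (d : ℕ) :
    ∑' n : ℕ, (-1) ^ n * q ^ ((a + d) * n ^ 2 + d * n) * (1 - q ^ ((2 * n + 1) * a)) =
      qPochInf (q ^ a) (q ^ (2 * (a + d))) * qPochInf (q ^ (a + 2 * d)) (q ^ (2 * (a + d))) *
        qPochInf (q ^ (2 * (a + d))) (q ^ (2 * (a + d))) := by
  rcases eq_or_ne q 0 with rfl | hq0
  · rw [tsum_eq_single 0]
    · have h : ∀ b Q : ℂ, b = 0 → qPochInf b Q = 1 := by rintro b Q rfl; simp [qPochInf]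
      rw [h _ _ (zero_pow (by omega)), h _ _ (zero_pow (by omega)), h _ _ (zero_pow (by omega))]
      simp [show a ≠ 0 by omega]
    · intro n hn
      rw [zero_pow (by positivity)]
      simp
  set k := a + d with hk
  have hP : ‖q ^ (2 * k)‖ < 1 := by
    rw [norm_pow]; exact pow_lt_one₀ (norm_nonneg q) hq (by omega)
  set P := q ^ (2 * k) with hPdef
  obtain ⟨C, hC, hCb⟩ := exists_norm_gaussBinom_le hP
  have hsq : ∀ n, n ≤ k * n ^ 2 + d * n := fun n => by
    have : n ≤ n ^ 2 := Nat.le_self_pow two_ne_zero n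
    nlinarith
  have hsq' : ∀ n, n ≤ k * n ^ 2 + d * n + (2 * n + 1) * a := fun n => (hsq n).trans (by omega)
  have hgeo := summable_geometric_of_lt_one (norm_nonneg q) hq
  have lim1 : Tendsto (fun N => ∑' n : ℕ, (if n < N + 1 then gaussBinom P (2 * N) (N - n) else 0) *
      ((-1) ^ n * q ^ (k * n ^ 2 + d * n))) atTop
      (𝓝 (∑' n : ℕ, (qPochInf P P)⁻¹ * ((-1) ^ n * q ^ (k * n ^ 2 + d * n)))) := by
    refine tendsto_tsum_of_dominated_convergence (hgeo.mul_left C) (fun n => ?_)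
      (Eventually.of_forall fun N n => ?_)
    · refine Tendsto.mul_const _ (Tendsto.congr' ?_ (tendsto_gaussBinom hP
        (tendsto_sub_atTop_nat n) (tendsto_add_atTop_nat n)))
      filter_upwards [eventually_ge_atTop n] with N hN
      rw [if_pos (by omega)]
      congr 1
      omega
    · rw [norm_mul]
      gcongr
      · split_ifs
        · exact hCb _ _
        · simpa using hC.le
      · exact norm_neg_one_pow_mul_le hq n (hsq n)
  have lim2 : Tendsto (fun N => ∑' n : ℕ, gaussBinom P (2 * N) (N + 1 + n) *
      ((-1) ^ (n + 1) * q ^ (k * n ^ 2 + d * n + (2 * n + 1) * a))) atTop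
      (𝓝 (∑' n : ℕ, (qPochInf P P)⁻¹ *
        ((-1) ^ (n + 1) * q ^ (k * n ^ 2 + d * n + (2 * n + 1) * a)))) := by
    refine tendsto_tsum_of_dominated_convergence (hgeo.mul_left C) (fun n => ?_)
      (Eventually.of_forall fun N n => ?_)
    · refine Tendsto.mul_const _ (Tendsto.congr' ?_ (tendsto_gaussBinom hP
        (tendsto_add_atTop_nat (1 + n)) (tendsto_sub_atTop_nat (1 + n))))
      filter_upwards [eventually_ge_atTop (1 + n)] with N hN
      congr 1 <;> omega
    · rw [norm_mul]
      gcongr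
      · exact hCb _ _
      · exact norm_neg_one_pow_mul_le hq _ (hsq' n)
  have hfin : ∀ N, qPochFin (q ^ a) P N * qPochFin (q ^ (a + 2 * d)) P N =
      (∑' n : ℕ, (if n < N + 1 then gaussBinom P (2 * N) (N - n) else 0) *
        ((-1) ^ n * q ^ (k * n ^ 2 + d * n))) +
      ∑' n : ℕ, gaussBinom P (2 * N) (N + 1 + n) *
        ((-1) ^ (n + 1) * q ^ (k * n ^ 2 + d * n + (2 * n + 1) * a)) := by
    intro N
    have h := prod_mul_prod_eq_sum (s := q ^ k) (w := -(q ^ d)⁻¹) (pow_ne_zero _ hq0)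
      (neg_ne_zero.2 (inv_ne_zero (pow_ne_zero _ hq0))) N
    rw [show (q ^ k) ^ 2 = P by rw [hPdef, ← pow_mul, mul_comm]] at h
    rw [tsum_eq_sum (s := range (N + 1)), tsum_eq_sum (s := range N)]
    · rw [qPochFin, qPochFin, ← prod_mul_distrib]
      refine Eq.trans (prod_congr rfl fun j _ => ?_) (h.trans ?_)
      · rw [hPdef, hk]
        congr 1
        · rw [← pow_mul, ← pow_mul, ← pow_add,
            show (a + d) * (2 * j + 1) = d + (a + 2 * (a + d) * j) by ring, pow_add q d]
          field_simp
          ring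
        · rw [← pow_mul, ← pow_mul, ← pow_add,
            show a + 2 * d + 2 * (a + d) * j = d + (a + d) * (2 * j + 1) by ring, pow_add q d]
          field_simp
          ring
      · congr 1
        · refine sum_congr rfl fun n hn => ?_
          rw [if_pos (mem_range.1 hn), ← inv_neg, inv_inv, neg_pow, ← pow_mul, ← pow_mul, pow_add]
          ring
        · refine sum_congr rfl fun n _ => ?_
          rw [neg_pow, inv_pow, ← pow_mul, ← pow_mul,
            show k * (n + 1) ^ 2 = d * (n + 1) + (k * n ^ 2 + d * n + (2 * n + 1) * a) by
              rw [hk]; ring, pow_add q (d * (n + 1))]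
          field_simp
    · intro n hn
      rw [gaussBinom_eq_zero _ (by rw [mem_range] at hn; omega), zero_mul]
    · intro n hn
      rw [if_neg (by rwa [mem_range] at hn), zero_mul]
  have hlim := tendsto_nhds_unique
    ((tendsto_qPochFin (q ^ a) hP).mul (tendsto_qPochFin (q ^ (a + 2 * d)) hP))
    ((lim1.add lim2).congr fun N => (hfin N).symm)
  rw [hlim, tsum_mul_left, tsum_mul_left, ← mul_add, mul_comm (_⁻¹), mul_assoc,
    inv_mul_cancel₀ (qPochInf_self_ne_zero hP), mul_one, ← Summable.tsum_add]
  · refine tsum_congr fun n => ?_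
    rw [pow_add q (k * n ^ 2 + d * n)]
    ring
  · exact Summable.of_norm_bounded hgeo fun n => norm_neg_one_pow_mul_le hq n (hsq n)
  · exact Summable.of_norm_bounded hgeo fun n => norm_neg_one_pow_mul_le hq _ (hsq' n)

end JacobiTripleProduct

section GordonSeries

/-- The ratio `(-q; q)_n / (q; q)_n`. -/
noncomputable def overRatio (q : ℂ) (n : ℕ) : ℂ := qPochFin (-q) q n / qPochFin q q n

lemma overRatio_zero (q : ℂ) : overRatio q 0 = 1 := by simp [overRatio, qPochFin_zero]

lemma overRatio_succ (q : ℂ) (n : ℕ) :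
    overRatio q (n + 1) = overRatio q n * ((1 + q ^ (n + 1)) / (1 - q ^ (n + 1))) := by
  rw [overRatio, overRatio, qPochFin_succ, qPochFin_succ, mul_div_mul_comm, pow_succ', neg_mul,
    sub_neg_eq_add]

lemma overRatio_ne_zero {q : ℂ} (hq : ‖q‖ < 1) (n : ℕ) : overRatio q n ≠ 0 :=
  div_ne_zero (qPochFin_neg_self_ne_zero hq n) (qPochFin_self_ne_zero hq n)

lemma tendsto_overRatio {q : ℂ} (hq : ‖q‖ < 1) :
    Tendsto (overRatio q) atTop (𝓝 (qPochInf (-q) q / qPochInf q q)) :=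
  (tendsto_qPochFin _ hq).div (tendsto_qPochFin _ hq) (qPochInf_self_ne_zero hq)

lemma tendsto_overRatio_inv {q : ℂ} (hq : ‖q‖ < 1) :
    Tendsto (fun n => (overRatio q n)⁻¹) atTop (𝓝 (qPochInf (-q) q / qPochInf q q)⁻¹) :=
  (tendsto_overRatio hq).inv₀
    (div_ne_zero (qPochInf_neg_self_ne_zero hq) (qPochInf_self_ne_zero hq))

lemma exists_norm_overRatio_mul_inv_le {q : ℂ} (hq : ‖q‖ < 1) :
    ∃ C : ℝ, 0 < C ∧ ∀ m n, ‖overRatio q m * (overRatio q n)⁻¹‖ ≤ C := by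
  obtain ⟨C, hC, h⟩ := exists_norm_le_of_tendsto (tendsto_overRatio hq)
  obtain ⟨D, hD, h'⟩ := exists_norm_le_of_tendsto (tendsto_overRatio_inv hq)
  refine ⟨C * D, by positivity, fun m n => ?_⟩
  rw [norm_mul]
  exact mul_le_mul (h m) (h' n) (norm_nonneg _) hC.le

/-- The `n`-th term of Andrews' series solving the `q`-difference equation for overpartitions
of Gordon type, with modulus `k = i + d`, first index `i` and parts larger than `j`. -/
noncomputable def gordonTerm (q : ℂ) (i d j n : ℕ) : ℂ :=
  (-1) ^ n * q ^ (j * (i + d) * n + (i + d) * n ^ 2 + d * n) * (1 - q ^ ((j + 1 + 2 * n) * i)) *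
    (overRatio q n * (overRatio q (n + j))⁻¹)

/-- The sum of `gordonTerm`. -/
noncomputable def gordonSeries (q : ℂ) (i d j : ℕ) : ℂ := ∑' n, gordonTerm q i d j n

lemma gordonSeries_zero (q : ℂ) (d j : ℕ) : gordonSeries q 0 d j = 0 := by
  simp [gordonSeries, gordonTerm]

lemma exists_norm_gordonTerm_le {q : ℂ} (hq : ‖q‖ < 1) :
    ∃ C : ℝ, 0 < C ∧ ∀ i d j n, ‖gordonTerm q i d j n‖ ≤ C * ‖q‖ ^ n := by
  obtain ⟨C, hC, h⟩ := exists_norm_overRatio_mul_inv_le hq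
  refine ⟨2 * C, by positivity, fun i d j n => ?_⟩
  rcases Nat.eq_zero_or_pos i with rfl | hi
  · simp only [gordonTerm, mul_zero, pow_zero, sub_self, zero_mul, norm_zero]
    positivity
  have hle : n ≤ j * (i + d) * n + (i + d) * n ^ 2 + d * n := by
    have : n ≤ n ^ 2 := Nat.le_self_pow two_ne_zero n
    nlinarith [Nat.zero_le (j * (i + d) * n)]
  have h2 : ‖1 - q ^ ((j + 1 + 2 * n) * i)‖ ≤ 2 := by
    refine (norm_sub_le _ _).trans ?_
    have := norm_pow_le_pow hq (Nat.zero_le ((j + 1 + 2 * n) * i))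
    rw [norm_one]
    linarith [pow_zero ‖q‖]
  calc ‖gordonTerm q i d j n‖ ≤ ‖q‖ ^ n * 2 * C := by
        rw [gordonTerm, norm_mul, norm_mul _ (1 - _)]
        gcongr
        · exact norm_neg_one_pow_mul_le hq n hle
        · exact h _ _
    _ = 2 * C * ‖q‖ ^ n := by ring

lemma summable_gordonTerm {q : ℂ} (hq : ‖q‖ < 1) (i d j : ℕ) : Summable (gordonTerm q i d j) := by
  obtain ⟨C, -, h⟩ := exists_norm_gordonTerm_le hq
  exact Summable.of_norm_bounded
    ((summable_geometric_of_lt_one (norm_nonneg q) hq).mul_left C) (h i d j)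

lemma gordonSeries_sub {q : ℂ} (hq : ‖q‖ < 1) (i d j : ℕ) :
    gordonSeries q (i + 1) d j - gordonSeries q i (d + 1) j =
      q ^ ((j + 1) * i) * (gordonSeries q (d + 1) i (j + 1) +
        q ^ (j + 1) * gordonSeries q d (i + 1) (j + 1)) := by
  set A : ℕ → ℂ := fun n => (-1) ^ n * q ^ (j * (i + 1 + d) * n + (i + 1 + d) * n ^ 2 + d * n) *
    (1 - q ^ n) * (overRatio q n * (overRatio q (n + j))⁻¹) with hA
  set B : ℕ → ℂ := fun n => (-1) ^ n * q ^ (j * (i + 1 + d) * n + (i + 1 + d) * n ^ 2 + d * n +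
    n + 2 * n * i + (j + 1) * i) *
    (1 - q ^ (n + j + 1)) * (overRatio q n * (overRatio q (n + j))⁻¹) with hB
  have h1 : ∀ n, gordonTerm q (i + 1) d j n - gordonTerm q i (d + 1) j n = A n + B n := by
    intro n
    simp only [gordonTerm, hA, hB]
    ring
  have h2 : ∀ n, q ^ ((j + 1) * i) * (gordonTerm q (d + 1) i (j + 1) n +
      q ^ (j + 1) * gordonTerm q d (i + 1) (j + 1) n) = A (n + 1) + B n := by
    intro n
    have e1 := one_sub_pow_ne_zero hq n
    have e2 := one_sub_pow_ne_zero hq (n + j)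
    have e3 := one_add_pow_ne_zero hq (n + j)
    have e4 := overRatio_ne_zero hq (n + j)
    have e5 : (1 - q ^ (n + 1)) * overRatio q (n + 1) = (1 + q ^ (n + 1)) * overRatio q n := by
      rw [overRatio_succ]
      field_simp
    have e6 : (1 - q ^ (n + j + 1)) * (overRatio q (n + j))⁻¹ =
        (1 + q ^ (n + j + 1)) * (overRatio q (n + j + 1))⁻¹ := by
      rw [overRatio_succ]
      field_simp
    have hA' : A (n + 1) = (-1) ^ (n + 1) * q ^ (j * (i + 1 + d) * (n + 1) +
        (i + 1 + d) * (n + 1) ^ 2 + d * (n + 1)) *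
        (((1 + q ^ (n + 1)) * overRatio q n) * (overRatio q (n + j + 1))⁻¹) := by
      rw [← e5, hA]
      simp only [show n + 1 + j = n + j + 1 by ring]
      ring
    have hB' : B n = (-1) ^ n * q ^ (j * (i + 1 + d) * n + (i + 1 + d) * n ^ 2 + d * n +
        n + 2 * n * i + (j + 1) * i) * (overRatio q n *
        ((1 + q ^ (n + j + 1)) * (overRatio q (n + j + 1))⁻¹)) := by
      rw [← e6, hB]
      ring
    rw [hA', hB']
    simp only [gordonTerm, ← add_assoc]
    ring
  have hsub := (summable_gordonTerm hq (i + 1) d j).sub (summable_gordonTerm hq i (d + 1) j)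
  have hadd := ((summable_gordonTerm hq (d + 1) i (j + 1)).add
    ((summable_gordonTerm hq d (i + 1) (j + 1)).mul_left (q ^ (j + 1)))).mul_left
      (q ^ ((j + 1) * i))
  have sA : Summable A := by
    obtain ⟨C, hC, h⟩ := exists_norm_overRatio_mul_inv_le hq
    refine Summable.of_norm_bounded
      ((summable_geometric_of_lt_one (norm_nonneg q) hq).mul_left (2 * C)) fun n => ?_
    have hle : n ≤ j * (i + 1 + d) * n + (i + 1 + d) * n ^ 2 + d * n := by
      have : n ≤ n ^ 2 := Nat.le_self_pow two_ne_zero n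
      nlinarith [Nat.zero_le (j * (i + 1 + d) * n), Nat.zero_le ((i + d) * n ^ 2)]
    have h2 : ‖1 - q ^ n‖ ≤ 2 := by
      refine (norm_sub_le _ _).trans ?_
      have := norm_pow_le_pow hq (Nat.zero_le n)
      rw [norm_one]
      linarith [pow_zero ‖q‖]
    calc ‖A n‖ ≤ ‖q‖ ^ n * 2 * C := by
          rw [hA]
          simp only
          rw [norm_mul, norm_mul _ (1 - _)]
          gcongr
          · exact norm_neg_one_pow_mul_le hq n hle
          · exact h _ _
      _ = 2 * C * ‖q‖ ^ n := by ring
  have sB : Summable B := by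
    refine (hsub.sub sA).congr fun n => ?_
    rw [h1]
    ring
  have hA0 : A 0 = 0 := by simp [hA]
  rw [gordonSeries, gordonSeries, gordonSeries, gordonSeries,
    ← (summable_gordonTerm hq (i + 1) d j).tsum_sub (summable_gordonTerm hq i (d + 1) j),
    ← tsum_mul_left, ← (summable_gordonTerm hq (d + 1) i (j + 1)).tsum_add
      ((summable_gordonTerm hq d (i + 1) (j + 1)).mul_left _), ← tsum_mul_left]
  simp only [h1, h2]
  rw [sA.tsum_add sB, ((summable_nat_add_iff 1).2 sA).tsum_add sB, sA.tsum_eq_zero_add, hA0,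
    zero_add]

lemma gordonSeries_eq_sum {q : ℂ} (hq : ‖q‖ < 1) {k i : ℕ} (hi : i ≤ k) (j : ℕ) :
    gordonSeries q i (k - i) j = ∑ b ∈ range i, q ^ ((j + 1) * b) *
      (gordonSeries q (k - b) b (j + 1) +
        q ^ (j + 1) * gordonSeries q (k - b - 1) (b + 1) (j + 1)) := by
  induction i with
  | zero => simp [gordonSeries_zero]
  | succ i ih =>
    rw [sum_range_succ, ← ih (by omega)]
    have h := gordonSeries_sub hq i (k - (i + 1)) j
    rw [show k - (i + 1) + 1 = k - i by omega] at h
    rw [show k - i - 1 = k - (i + 1) by omega]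
    linear_combination h

lemma tendsto_gordonSeries {q : ℂ} (hq : ‖q‖ < 1) {i : ℕ} (hi : 1 ≤ i) (d : ℕ) :
    Tendsto (gordonSeries q i d) atTop (𝓝 (qPochInf (-q) q / qPochInf q q)⁻¹) := by
  obtain ⟨C, hC, h⟩ := exists_norm_gordonTerm_le hq
  have hpow : ∀ e : ℕ → ℕ, (∀ j, j ≤ e j) → Tendsto (fun j => q ^ e j) atTop (𝓝 0) :=
    fun e he => (tendsto_pow_atTop_nhds_zero_of_norm_lt_one hq).comp
      (tendsto_atTop_mono he tendsto_id)
  have h1 : Tendsto (fun j => ∑' n, gordonTerm q i d j n) atTop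
      (𝓝 (∑' n : ℕ, if n = 0 then (qPochInf (-q) q / qPochInf q q)⁻¹ else 0)) := by
    refine tendsto_tsum_of_dominated_convergence
      ((summable_geometric_of_lt_one (norm_nonneg q) hq).mul_left C) (fun n => ?_)
      (Eventually.of_forall fun j n => h i d j n)
    have hover : Tendsto (fun j => (overRatio q (n + j))⁻¹) atTop
        (𝓝 (qPochInf (-q) q / qPochInf q q)⁻¹) :=
      (tendsto_overRatio_inv hq).comp (tendsto_atTop_mono (fun j => Nat.le_add_left j n) tendsto_id)
    have hfac : Tendsto (fun j => 1 - q ^ ((j + 1 + 2 * n) * i)) atTop (𝓝 (1 - 0)) :=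
      tendsto_const_nhds.sub (hpow _ fun j => by nlinarith)
    split_ifs with hn
    · subst hn
      have := hfac.mul hover
      simpa [gordonTerm, overRatio_zero] using this
    · have hz := hpow (fun j => j * (i + d) * n + (i + d) * n ^ 2 + d * n) fun j => by
        have : 1 ≤ (i + d) * n := Nat.mul_pos (by omega) (Nat.pos_of_ne_zero hn)
        nlinarith [Nat.zero_le ((i + d) * n ^ 2 + d * n)]
      have := ((hz.const_mul ((-1) ^ n)).mul hfac).mul (hover.const_mul (overRatio q n))
      simpa [gordonTerm] using this
  rwa [tsum_ite_eq] at h1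

end GordonSeries

section GordonRecursion

/-- The weighted count, by recursion on the number `r` of available part sizes `j + 1, …, j + r`,
of the overpartitions with `f_{j+1} < i` and `f_l + f_{l̄} + f_{l+1} < k`. -/
noncomputable def gordonRec (q : ℂ) (k : ℕ) : ℕ → ℕ → ℕ → ℂ
  | 0, _, i => if i = 0 then 0 else 1
  | r + 1, j, i => ∑ b ∈ range i, q ^ ((j + 1) * b) *
      (gordonRec q k r (j + 1) (k - b) + q ^ (j + 1) * gordonRec q k r (j + 1) (k - b - 1))

lemma norm_overRatio_norm_succ {q : ℂ} (hq : ‖q‖ < 1) (n : ℕ) :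
    ‖overRatio (‖q‖ : ℂ) (n + 1)‖ * (1 - ‖q‖ ^ (n + 1)) =
      ‖overRatio (‖q‖ : ℂ) n‖ * (1 + ‖q‖ ^ (n + 1)) := by
  have h0 : ‖q‖ ^ (n + 1) < 1 := pow_lt_one₀ (norm_nonneg q) hq n.succ_ne_zero
  have h1 : ‖(1 : ℂ) - (‖q‖ : ℂ) ^ (n + 1)‖ = 1 - ‖q‖ ^ (n + 1) := by
    rw [show (1 : ℂ) - (‖q‖ : ℂ) ^ (n + 1) = ((1 - ‖q‖ ^ (n + 1) : ℝ) : ℂ) by push_cast; ring,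
      Complex.norm_real, Real.norm_of_nonneg (by linarith)]
  have h2 : ‖(1 : ℂ) + (‖q‖ : ℂ) ^ (n + 1)‖ = 1 + ‖q‖ ^ (n + 1) := by
    rw [show (1 : ℂ) + (‖q‖ : ℂ) ^ (n + 1) = ((1 + ‖q‖ ^ (n + 1) : ℝ) : ℂ) by push_cast; ring,
      Complex.norm_real, Real.norm_of_nonneg (by positivity)]
  rw [overRatio_succ, norm_mul, norm_div, h1, h2]
  have : 1 - ‖q‖ ^ (n + 1) ≠ 0 := by linarith
  field_simp

lemma norm_gordonRec_sub_le {q : ℂ} (hq : ‖q‖ < 1) (k : ℕ) (c : ℂ) {ε : ℝ} (r j : ℕ)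
    (h : ∀ i ≤ k, ‖gordonRec q k 0 (j + r) i - c * gordonSeries q i (k - i) (j + r)‖ ≤ ε) :
    ∀ i ≤ k, ‖gordonRec q k r j i - c * gordonSeries q i (k - i) j‖ *
      ‖overRatio (‖q‖ : ℂ) j‖ ≤ ε * ‖overRatio (‖q‖ : ℂ) (j + r)‖ := by
  induction r generalizing j with
  | zero =>
    intro i hi
    exact mul_le_mul_of_nonneg_right (h i hi) (norm_nonneg _)
  | succ r ih =>
    intro i hi
    have ih := ih (j + 1) (by rwa [show j + 1 + r = j + (r + 1) by ring])
    rw [show j + 1 + r = j + (r + 1) by ring] at ih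
    set E := ε * ‖overRatio (‖q‖ : ℂ) (j + (r + 1))‖ with hE
    set D : ℕ → ℂ := fun i => gordonRec q k r (j + 1) i - c * gordonSeries q i (k - i) (j + 1)
      with hD
    have hE0 : 0 ≤ E := (mul_nonneg (norm_nonneg _) (norm_nonneg _)).trans (ih 0 (Nat.zero_le k))
    have hx := pow_lt_one₀ (norm_nonneg q) hq j.succ_ne_zero
    have hx0 : 0 ≤ ‖q‖ ^ (j + 1) := by positivity
    have hsum : gordonRec q k (r + 1) j i - c * gordonSeries q i (k - i) j =
        ∑ b ∈ range i, q ^ ((j + 1) * b) * (D (k - b) + q ^ (j + 1) * D (k - b - 1)) := by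
      rw [gordonRec, gordonSeries_eq_sum hq hi, mul_sum, ← sum_sub_distrib]
      refine sum_congr rfl fun b hb => ?_
      have hb := mem_range.1 hb
      simp only [hD]
      rw [show k - (k - b) = b by omega, show k - (k - b - 1) = b + 1 by omega]
      ring
    have hR := norm_overRatio_norm_succ hq j
    set R := ‖overRatio (‖q‖ : ℂ) j‖ with hRdef
    set R' := ‖overRatio (‖q‖ : ℂ) (j + 1)‖ with hRdef'
    have hR'pos : 0 < R' := norm_pos_iff.2 (overRatio_ne_zero (by simpa using hq) _)
    have hterm : ∀ b ∈ range i,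
        ‖q ^ ((j + 1) * b) * (D (k - b) + q ^ (j + 1) * D (k - b - 1))‖ * R' ≤
          (‖q‖ ^ (j + 1)) ^ b * ((1 + ‖q‖ ^ (j + 1)) * E) := by
      intro b _
      have h1 := ih (k - b) (by omega)
      have h2 := ih (k - b - 1) (by omega)
      rw [norm_mul, norm_pow, pow_mul, mul_assoc]
      refine mul_le_mul_of_nonneg_left ?_ (by positivity)
      calc ‖D (k - b) + q ^ (j + 1) * D (k - b - 1)‖ * R'
          ≤ (‖D (k - b)‖ + ‖q‖ ^ (j + 1) * ‖D (k - b - 1)‖) * R' := by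
            gcongr
            refine (norm_add_le _ _).trans ?_
            rw [norm_mul, norm_pow]
        _ = ‖D (k - b)‖ * R' + ‖q‖ ^ (j + 1) * (‖D (k - b - 1)‖ * R') := by ring
        _ ≤ E + ‖q‖ ^ (j + 1) * E := by gcongr
        _ = (1 + ‖q‖ ^ (j + 1)) * E := by ring
    have hgeo : (∑ b ∈ range i, (‖q‖ ^ (j + 1)) ^ b) * (1 - ‖q‖ ^ (j + 1)) ≤ 1 := by
      rw [geom_sum_mul_neg]
      linarith [pow_nonneg hx0 i]
    have hbound : ‖gordonRec q k (r + 1) j i - c * gordonSeries q i (k - i) j‖ * R' ≤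
        (∑ b ∈ range i, (‖q‖ ^ (j + 1)) ^ b) * ((1 + ‖q‖ ^ (j + 1)) * E) := by
      rw [hsum, sum_mul]
      refine (mul_le_mul_of_nonneg_right (norm_sum_le _ _) hR'pos.le).trans ?_
      rw [sum_mul]
      exact sum_le_sum hterm
    set X := ‖gordonRec q k (r + 1) j i - c * gordonSeries q i (k - i) j‖
    set S := ∑ b ∈ range i, (‖q‖ ^ (j + 1)) ^ b
    have hpos : 0 < 1 + ‖q‖ ^ (j + 1) := by positivity
    refine le_of_mul_le_mul_right ?_ hpos
    calc X * R * (1 + ‖q‖ ^ (j + 1)) = X * R' * (1 - ‖q‖ ^ (j + 1)) := by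
          rw [mul_assoc, ← hR]; ring
      _ ≤ S * ((1 + ‖q‖ ^ (j + 1)) * E) * (1 - ‖q‖ ^ (j + 1)) := by
          gcongr
      _ = (S * (1 - ‖q‖ ^ (j + 1))) * (E * (1 + ‖q‖ ^ (j + 1))) := by ring
      _ ≤ 1 * (E * (1 + ‖q‖ ^ (j + 1))) := by gcongr
      _ = E * (1 + ‖q‖ ^ (j + 1)) := one_mul _

lemma tendsto_gordonRec {q : ℂ} (hq : ‖q‖ < 1) {k i : ℕ} (hi : i ≤ k) :
    Tendsto (fun r => gordonRec q k r 0 i) atTop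
      (𝓝 (qPochInf (-q) q / qPochInf q q * gordonSeries q i (k - i) 0)) := by
  set c := qPochInf (-q) q / qPochInf q q with hc
  have hc0 : c ≠ 0 := div_ne_zero (qPochInf_neg_self_ne_zero hq) (qPochInf_self_ne_zero hq)
  obtain ⟨C, hC, hR⟩ := exists_norm_le_of_tendsto
    (tendsto_overRatio (q := (‖q‖ : ℂ)) (by simpa using hq))
  set ε : ℕ → ℝ := fun r => ∑ i ∈ range (k + 1),
    ‖gordonRec q k 0 r i - c * gordonSeries q i (k - i) r‖ with hε
  have hlim : Tendsto ε atTop (𝓝 0) := by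
    rw [← sum_const_zero (ι := ℕ) (s := range (k + 1))]
    refine tendsto_finsetSum _ fun i _ => ?_
    rw [← tendsto_zero_iff_norm_tendsto_zero]
    rcases Nat.eq_zero_or_pos i with rfl | hi
    · simp [gordonRec, gordonSeries_zero]
    · have := ((tendsto_gordonSeries hq hi (k - i)).const_mul c).const_sub 1
      rw [mul_inv_cancel₀ hc0, sub_self] at this
      simpa [gordonRec, Nat.pos_iff_ne_zero.1 hi] using this
  rw [tendsto_iff_norm_sub_tendsto_zero]
  have hlim' := hlim.mul_const C
  rw [zero_mul] at hlim'
  refine squeeze_zero (fun _ => norm_nonneg _) (fun r => ?_) hlim'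
  have h := norm_gordonRec_sub_le hq k c (ε := ε r) r 0 (fun i hi => by
    rw [zero_add, hε]
    exact single_le_sum (f := fun i => ‖gordonRec q k 0 r i - c * gordonSeries q i (k - i) r‖)
      (fun _ _ => norm_nonneg _) (mem_range.2 (Nat.lt_succ_of_le hi))) i hi
  rw [overRatio_zero, norm_one, mul_one, zero_add] at h
  exact h.trans (mul_le_mul_of_nonneg_left (hR r) (sum_nonneg fun _ _ => norm_nonneg _))

end GordonRecursion

section Overpartitions

/-- The conditions counted by `ubarCount 2 (2 * k) (2 * i)`, for overpartitions all of whose parts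
are larger than `j`. -/
def ParityGordon (k j i : ℕ) (p : (ℕ →₀ ℕ) × (ℕ →₀ ℕ)) : Prop :=
  (∀ l ≤ j, p.1 l = 0 ∧ p.2 l = 0) ∧ (∀ l, p.2 l ≤ 1) ∧
  p.1 (j + 1) + 1 ≤ 2 * i + p.2 (j + 1) ∧
  (∀ l, Even l → p.2 l ≤ p.1 l) ∧ (∀ l, Odd l → Even (p.1 l + p.2 l)) ∧
  ∀ l, j < l → p.1 l + p.2 l + p.1 (l + 1) + 1 ≤ 2 * k + p.2 (l + 1)

lemma parityGordon_zero_iff (k a : ℕ) (p : (ℕ →₀ ℕ) × (ℕ →₀ ℕ)) :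
    IsOverPtn p ∧ ubarCond 2 (2 * k) (2 * a) p ↔ ParityGordon k 0 a p := by
  simp only [IsOverPtn, ubarCond, ParityGordon, Nat.add_one_sub_one, one_mul, zero_add,
    nonpos_iff_eq_zero, forall_eq, ← even_iff_two_dvd]
  constructor
  · rintro ⟨⟨h1, h2, h3⟩, h4, h5, h6, h7⟩
    refine ⟨⟨h1, h2⟩, h3, h4, fun l hl => ?_, fun l hl => ?_, fun l hl => h7 l hl⟩
    · obtain ⟨m, rfl⟩ := hl
      rcases m with _ | m
      · simp [h1, h2]
      · simpa only [show m + 1 + (m + 1) = 2 * m + 2 by ring] using h5 m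
    · obtain ⟨m, rfl⟩ := hl
      exact h6 m
  · rintro ⟨⟨h1, h2⟩, h3, h4, h5, h6, h7⟩
    exact ⟨⟨h1, h2, h3⟩, h4, fun l => h5 _ ⟨l + 1, by ring⟩, fun l => h6 _ ⟨l, rfl⟩,
      fun l hl => h7 l hl⟩

lemma ubarCond_two_mul_sub_one_iff {N a : ℕ} (ha : 1 ≤ a) (p : (ℕ →₀ ℕ) × (ℕ →₀ ℕ)) :
    ubarCond 2 N (2 * a - 1) p ↔ ubarCond 2 N (2 * a) p := by
  refine ⟨fun ⟨h1, h2, h3, h4⟩ => ⟨by omega, h2, h3, h4⟩,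
    fun ⟨h1, h2, h3, h4⟩ => ⟨?_, h2, h3, h4⟩⟩
  have := h3 0
  simp only [mul_zero, zero_add] at this
  omega

/-- Add to `p` the part `l`, with `x = (b, e, ε)` encoding `f_{l̄} = e` and `f_l = 2 b + ε + e`. -/
noncomputable def insertPart (l : ℕ) (x : ℕ × ℕ × ℕ) (p : (ℕ →₀ ℕ) × (ℕ →₀ ℕ)) :
    (ℕ →₀ ℕ) × (ℕ →₀ ℕ) :=
  (Finsupp.single l (2 * x.1 + x.2.2 + x.2.1) + p.1, Finsupp.single l x.2.1 + p.2)

lemma opWt_insertPart (l : ℕ) (x : ℕ × ℕ × ℕ) (p : (ℕ →₀ ℕ) × (ℕ →₀ ℕ)) :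
    opWt (insertPart l x p) = l * (2 * x.1 + x.2.2 + 2 * x.2.1) + opWt p := by
  simp only [opWt, insertPart]
  rw [Finsupp.sum_add_index' (fun _ => rfl) (fun _ _ _ => by ring),
    Finsupp.sum_add_index' (fun _ => rfl) (fun _ _ _ => by ring),
    Finsupp.sum_single_index rfl, Finsupp.sum_single_index rfl]
  ring

/-- The multiplicities `x = (b, e, ε)` allowed for the part `l` when `b < i`. -/
def partChoices (l i : ℕ) : Finset (ℕ × ℕ × ℕ) :=
  range i ×ˢ range 2 ×ˢ range (if Even l then 2 else 1)

/-- The overpartitions satisfying `ParityGordon k j i` with parts in `{j + 1, …, j + r}`. -/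
noncomputable def parityGordonFinset (k : ℕ) : ℕ → ℕ → ℕ → Finset ((ℕ →₀ ℕ) × (ℕ →₀ ℕ))
  | 0, _, i => if i = 0 then ∅ else {0}
  | r + 1, j, i => (partChoices (j + 1) i).biUnion fun x =>
      (parityGordonFinset k r (j + 1) (k - x.1 - x.2.1)).image (insertPart (j + 1) x)

lemma mem_parityGordonFinset {k : ℕ} (r j : ℕ) {i : ℕ} (hi : i ≤ k)
    (p : (ℕ →₀ ℕ) × (ℕ →₀ ℕ)) :
    p ∈ parityGordonFinset k r j i ↔
      ParityGordon k j i p ∧ ∀ l, j + r < l → p.1 l = 0 ∧ p.2 l = 0 := by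
  induction r generalizing j i p with
  | zero =>
    have hp : (ParityGordon k j i p ∧ ∀ l, j + 0 < l → p.1 l = 0 ∧ p.2 l = 0) ↔ i ≠ 0 ∧ p = 0 := by
      constructor
      · rintro ⟨⟨h1, -, h3, -⟩, h⟩
        have hz : ∀ l, p.1 l = 0 ∧ p.2 l = 0 := fun l =>
          (le_or_gt l j).elim (h1 l) (h l)
        refine ⟨?_, Prod.ext (Finsupp.ext fun l => (hz l).1) (Finsupp.ext fun l => (hz l).2)⟩
        have := hz (j + 1)
        omega
      · rintro ⟨h0, rfl⟩
        refine ⟨⟨by simp, by simp, ?_, by simp, by simp, fun l _ => ?_⟩, by simp⟩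
        · simp; omega
        · simp; omega
    rw [hp, parityGordonFinset]
    split_ifs with h <;> simp [h]
  | succ r ih =>
    simp only [parityGordonFinset, partChoices, mem_biUnion, mem_product, mem_range, mem_image]
    constructor
    · rintro ⟨⟨b, e, ε⟩, ⟨hb, he, hε⟩, p, hp, rfl⟩
      dsimp only at hb he hε hp
      rw [ih _ (by omega)] at hp
      obtain ⟨⟨h1, h2, h3, h4, h5, h6⟩, h7⟩ := hp
      have hv1 : (insertPart (j + 1) (b, e, ε) p).1 (j + 1) = 2 * b + ε + e := by
        simp [insertPart, (h1 (j + 1) le_rfl).1]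
      have hv2 : (insertPart (j + 1) (b, e, ε) p).2 (j + 1) = e := by
        simp [insertPart, (h1 (j + 1) le_rfl).2]
      have hn1 : ∀ l, l ≠ j + 1 → (insertPart (j + 1) (b, e, ε) p).1 l = p.1 l := fun l hl => by
        simp [insertPart, hl.symm]
      have hn2 : ∀ l, l ≠ j + 1 → (insertPart (j + 1) (b, e, ε) p).2 l = p.2 l := fun l hl => by
        simp [insertPart, hl.symm]
      refine ⟨⟨fun l hl => ?_, fun l => ?_, ?_, fun l hl => ?_, fun l hl => ?_, fun l hl => ?_⟩,
        fun l hl => ?_⟩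
      · rw [hn1 l (by omega), hn2 l (by omega)]
        exact h1 l (by omega)
      · rcases eq_or_ne l (j + 1) with rfl | hl
        · omega
        · rw [hn2 l hl]; exact h2 l
      · rw [hv1, hv2]
        split_ifs at hε <;> omega
      · rcases eq_or_ne l (j + 1) with rfl | hl'
        · omega
        · rw [hn1 l hl', hn2 l hl']; exact h4 l hl
      · rcases eq_or_ne l (j + 1) with rfl | hl'
        · rw [hv1, hv2]
          rw [if_neg (Nat.not_even_iff_odd.2 hl)] at hε
          exact ⟨b + e, by omega⟩
        · rw [hn1 l hl', hn2 l hl']; exact h5 l hl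
      · rcases eq_or_ne l (j + 1) with rfl | hl'
        · rw [hv1, hv2, hn1 _ (by omega), hn2 _ (by omega)]
          have h2' := h2 (j + 1 + 1)
          by_cases hj : Even (j + 1)
          · obtain ⟨m, hm⟩ := h5 (j + 1 + 1) hj.add_one
            rw [if_pos hj] at hε
            omega
          · rw [if_neg hj] at hε
            omega
        · rw [hn1 l hl', hn2 l hl', hn1 _ (by omega), hn2 _ (by omega)]
          exact h6 l (by omega)
      · rw [hn1 l (by omega), hn2 l (by omega)]
        exact h7 l (by omega)
    · rintro ⟨⟨h1, h2, h3, h4, h5, h6⟩, h7⟩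
      have hle : p.2 (j + 1) ≤ p.1 (j + 1) := by
        rcases Nat.even_or_odd (j + 1) with hj | hj
        · exact h4 _ hj
        · obtain ⟨m, hm⟩ := h5 _ hj
          have := h2 (j + 1)
          omega
      have h2' := h2 (j + 1)
      have h6' := h6 (j + 1) (by omega)
      have he1 : ∀ l, l ≠ j + 1 → p.1.erase (j + 1) l = p.1 l := fun l hl =>
        Finsupp.erase_ne hl
      have he2 : ∀ l, l ≠ j + 1 → p.2.erase (j + 1) l = p.2 l := fun l hl =>
        Finsupp.erase_ne hl
      refine ⟨((p.1 (j + 1) - p.2 (j + 1)) / 2, p.2 (j + 1), (p.1 (j + 1) - p.2 (j + 1)) % 2),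
        ⟨by dsimp only; omega, by dsimp only; omega, ?_⟩, (p.1.erase (j + 1), p.2.erase (j + 1)), ?_, ?_⟩
      · dsimp only
        split_ifs with hj
        · omega
        · obtain ⟨m, hm⟩ := h5 _ (Nat.not_even_iff_odd.1 hj)
          omega
      · dsimp only
        rw [ih _ (by omega)]
        refine ⟨⟨fun l hl => ?_, fun l => ?_, ?_, fun l hl => ?_, fun l hl => ?_, fun l hl => ?_⟩,
          fun l hl => ?_⟩
        · rcases eq_or_ne l (j + 1) with rfl | hl'
          · simp
          · simp only [he1 l hl', he2 l hl']
            exact h1 l (by omega)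
        · rcases eq_or_ne l (j + 1) with rfl | hl'
          · simp
          · simp only [he2 l hl']
            exact h2 l
        · simp only [he1 (j + 1 + 1) (by omega), he2 (j + 1 + 1) (by omega)]
          have h2'' := h2 (j + 1 + 1)
          rcases Nat.even_or_odd (j + 1) with hj | hj
          · obtain ⟨m, hm⟩ := h5 (j + 1 + 1) hj.add_one
            omega
          · obtain ⟨m, hm⟩ := h5 (j + 1) hj
            omega
        · rcases eq_or_ne l (j + 1) with rfl | hl'
          · simp
          · simp only [he1 l hl', he2 l hl']
            exact h4 l hl
        · rcases eq_or_ne l (j + 1) with rfl | hl'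
          · simp
          · simp only [he1 l hl', he2 l hl']
            exact h5 l hl
        · simp only [he1 l (by omega), he2 l (by omega), he1 (l + 1) (by omega),
            he2 (l + 1) (by omega)]
          exact h6 l (by omega)
        · simp only [he1 l (by omega), he2 l (by omega)]
          exact h7 l (by omega)
      · refine Prod.ext ?_ ?_
        · simp only [insertPart]
          rw [show 2 * ((p.1 (j + 1) - p.2 (j + 1)) / 2) + (p.1 (j + 1) - p.2 (j + 1)) % 2 +
            p.2 (j + 1) = p.1 (j + 1) by omega]
          exact Finsupp.single_add_erase _ _
        · exact Finsupp.single_add_erase _ _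

lemma sum_parityGordonFinset_succ (q : ℂ) {k i : ℕ} (hi : i ≤ k) (r j : ℕ) :
    ∑ p ∈ parityGordonFinset k (r + 1) j i, q ^ opWt p =
      ∑ x ∈ partChoices (j + 1) i, q ^ ((j + 1) * (2 * x.1 + x.2.2 + 2 * x.2.1)) *
        ∑ p ∈ parityGordonFinset k r (j + 1) (k - x.1 - x.2.1), q ^ opWt p := by
  rw [parityGordonFinset, sum_biUnion]
  · refine sum_congr rfl fun x _ => ?_
    rw [sum_image, mul_sum]
    · exact sum_congr rfl fun p _ => by rw [opWt_insertPart, pow_add]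
    · intro p _ p' _ h
      simp only [insertPart, Prod.mk.injEq, add_right_inj] at h
      exact Prod.ext h.1 h.2
  · rintro ⟨b, e, ε⟩ hx ⟨b', e', ε'⟩ hx' hne
    refine disjoint_left.2 fun p hp hp' => hne ?_
    obtain ⟨p₁, h₁, rfl⟩ := mem_image.1 hp
    obtain ⟨p₂, h₂, h⟩ := mem_image.1 hp'
    have z₁ := ((mem_parityGordonFinset _ _ (by omega) _).1 h₁).1.1 (j + 1) le_rfl
    have z₂ := ((mem_parityGordonFinset _ _ (by omega) _).1 h₂).1.1 (j + 1) le_rfl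
    have e1 := congrArg (fun p => p.1 (j + 1)) h
    have e2 := congrArg (fun p => p.2 (j + 1)) h
    simp only [insertPart, Finsupp.add_apply, Finsupp.single_eq_same, z₁, z₂, add_zero] at e1 e2
    have hε : ε < 2 := by
      have := (mem_product.1 (mem_product.1 hx).2).2
      simp only [mem_range] at this
      split_ifs at this <;> omega
    have hε' : ε' < 2 := by
      have := (mem_product.1 (mem_product.1 hx').2).2
      simp only [mem_range] at this
      split_ifs at this <;> omega
    simp only [Prod.mk.injEq]
    omega

lemma sum_parityGordonFinset (q : ℂ) {k : ℕ} (r j : ℕ) {i : ℕ} (hi : i ≤ k) :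
    ∑ p ∈ parityGordonFinset k r j i, q ^ opWt p =
      (∏ l ∈ range r, if Even (j + 1 + l) then 1 + q ^ (j + 1 + l) else 1) *
        gordonRec (q ^ 2) k r j i := by
  induction r generalizing j i with
  | zero =>
    rw [parityGordonFinset, gordonRec]
    split_ifs <;> simp [opWt]
  | succ r ih =>
    rw [sum_parityGordonFinset_succ q hi, partChoices, sum_product, gordonRec, mul_sum]
    refine sum_congr rfl fun b _ => ?_
    rw [sum_product, prod_range_succ']
    simp only [sum_range_succ, sum_range_zero, zero_add, add_zero]
    rw [ih (j + 1) (by omega), ih (j + 1) (by omega)]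
    simp only [show ∀ l, j + 1 + 1 + l = j + 1 + (l + 1) by intro l; ring, Nat.sub_zero]
    split_ifs
    · simp only [sum_range_succ, sum_range_zero]
      ring
    · simp only [sum_range_succ, sum_range_zero]
      ring

lemma prod_range_even (q : ℂ) (m : ℕ) :
    (∏ l ∈ range (2 * m), if Even (0 + 1 + l) then 1 + q ^ (0 + 1 + l) else 1) =
      qPochFin (-(q ^ 2)) (q ^ 2) m := by
  induction m with
  | zero => simp [qPochFin]
  | succ m ih =>
    rw [show 2 * (m + 1) = 2 * m + 1 + 1 by ring, prod_range_succ, prod_range_succ, ih,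
      qPochFin_succ, if_neg (by simp [parity_simps]), if_pos (by simp [parity_simps])]
    ring

lemma tendsto_sum_parityGordonFinset {q : ℂ} (hq : ‖q‖ < 1) {k a : ℕ} (hak : a ≤ k) :
    Tendsto (fun m => ∑ p ∈ parityGordonFinset k (2 * m) 0 a, q ^ opWt p) atTop
      (𝓝 (qPochInf (-(q ^ 2)) (q ^ 2) * (qPochInf (-(q ^ 2)) (q ^ 2) / qPochInf (q ^ 2) (q ^ 2) *
        gordonSeries (q ^ 2) a (k - a) 0))) := by
  have hq2 : ‖q ^ 2‖ < 1 := by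
    rw [norm_pow]; exact pow_lt_one₀ (norm_nonneg q) hq two_ne_zero
  simp only [sum_parityGordonFinset q _ 0 hak, prod_range_even]
  exact (tendsto_qPochFin _ hq2).mul ((tendsto_gordonRec hq2 hak).comp
    (tendsto_atTop_mono (fun m => by simp only [id]; omega) tendsto_id))

lemma hasSum_parityGordon {q : ℂ} (hq : ‖q‖ < 1) {k a : ℕ} (hak : a ≤ k) :
    HasSum (fun p : {p // ParityGordon k 0 a p} => q ^ opWt p.1)
      (qPochInf (-(q ^ 2)) (q ^ 2) * (qPochInf (-(q ^ 2)) (q ^ 2) / qPochInf (q ^ 2) (q ^ 2) *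
        gordonSeries (q ^ 2) a (k - a) 0)) := by
  classical
  set F : ℕ → Finset {p // ParityGordon k 0 a p} := fun m =>
    (parityGordonFinset k (2 * m) 0 a).subtype (ParityGordon k 0 a) with hF
  have hFmem : ∀ m p, p ∈ F m ↔ ∀ l, 0 + 2 * m < l → p.1.1 l = 0 ∧ p.1.2 l = 0 := fun m p => by
    rw [hF, mem_subtype, mem_parityGordonFinset _ _ hak]
    exact and_iff_right p.2
  have hmono : Monotone F := fun m m' h p hp => by
    rw [hFmem] at hp ⊢
    exact fun l hl => hp l (by omega)
  have hex : ∀ p, ∃ m, p ∈ F m := fun p => by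
    refine ⟨p.1.1.support.sup id + p.1.2.support.sup id, (hFmem _ _).2 fun l hl => ⟨?_, ?_⟩⟩
    · by_contra h
      have := le_sup (f := id) (Finsupp.mem_support_iff.2 h)
      simp only [id] at this hl
      omega
    · by_contra h
      have := le_sup (f := id) (Finsupp.mem_support_iff.2 h)
      simp only [id] at this hl
      omega
  have htop : Tendsto F atTop atTop := tendsto_atTop_finset_of_monotone hmono hex
  have hFsum : ∀ (z : ℂ) m, ∑ p ∈ F m, z ^ opWt p.1 =
      ∑ p ∈ parityGordonFinset k (2 * m) 0 a, z ^ opWt p := fun z m =>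
    sum_subtype_of_mem (fun p => z ^ opWt p)
      fun p hp => ((mem_parityGordonFinset _ _ hak p).1 hp).1
  have hsum : Summable fun p : {p // ParityGordon k 0 a p} => q ^ opWt p.1 := by
    obtain ⟨C, -, hC⟩ := exists_norm_le_of_tendsto
      (tendsto_sum_parityGordonFinset (q := (‖q‖ : ℂ)) (by simpa using hq) hak)
    refine Summable.of_norm (summable_of_sum_le (c := C) (fun _ => norm_nonneg _) fun u => ?_)
    obtain ⟨m, hm⟩ := (htop.eventually_ge_atTop u).exists
    refine (sum_le_sum_of_subset_of_nonneg hm fun _ _ _ => norm_nonneg _).trans ?_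
    refine le_trans (le_of_eq ?_) (hC m)
    rw [← hFsum, ← Complex.norm_of_nonneg (sum_nonneg fun _ _ => norm_nonneg _)]
    push_cast
    simp only [norm_pow, Complex.ofReal_pow]
  have h := tendsto_nhds_unique (hsum.hasSum.comp htop)
    ((tendsto_sum_parityGordonFinset hq hak).congr fun m => (hFsum q m).symm)
  rw [← h]
  exact hsum.hasSum

lemma tsum_ubarCount_eq {q : ℂ} (hq : ‖q‖ < 1) {k a : ℕ} (hak : a ≤ k) :
    ∑' mn : ℕ × ℕ, (ubarCount 2 (2 * k) (2 * a) mn.1 mn.2 : ℂ) * q ^ mn.2 =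
      qPochInf (-(q ^ 2)) (q ^ 2) * (qPochInf (-(q ^ 2)) (q ^ 2) / qPochInf (q ^ 2) (q ^ 2) *
        gordonSeries (q ^ 2) a (k - a) 0) := by
  set g : {p // ParityGordon k 0 a p} → ℕ × ℕ := fun p => (opParts p.1, opWt p.1) with hg
  refine Eq.trans (tsum_congr fun mn => ?_) ((hasSum_parityGordon hq hak).tsum_fiberwise g).tsum_eq
  have h1 : ∀ p : ↑(g ⁻¹' {mn}), q ^ opWt p.1.1 = q ^ mn.2 := fun p =>
    congrArg (fun x : ℕ × ℕ => q ^ x.2) (show g p.1 = mn from p.2)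
  rw [tsum_congr h1, tsum_const, nsmul_eq_mul]
  congr 2
  rw [Nat.card_coe_set_eq, ← Set.ncard_image_of_injective _ Subtype.val_injective, ubarCount]
  congr 1
  ext p
  constructor
  · rintro ⟨h1, h2, h3, h4⟩
    exact ⟨⟨p, (parityGordon_zero_iff k a p).1 ⟨h1, h4⟩⟩, Prod.ext h2 h3, rfl⟩
  · rintro ⟨p, hp, rfl⟩
    obtain ⟨h1, h4⟩ := (parityGordon_zero_iff k a p.1).2 p.2
    exact ⟨h1, congrArg Prod.fst hp, congrArg Prod.snd hp, h4⟩

end Overpartitions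

/-- Sang–Shi–Yee (Theorem 1.13): for `1 ≤ a ≤ k`,
`Σ_{n≥0} Ū_{2k, 2a-1}(n) q^n = Σ_{n≥0} Ū_{2k, 2a}(n) q^n
  = (−q^2; q^2)_∞^2 (q^{2a}, q^{4k-2a}, q^{4k}; q^{4k})_∞ / (q^2; q^2)_∞`. -/
theorem sang_shi_yee_barred (k a : ℕ) (hk : 1 ≤ k) (ha : 1 ≤ a) (hak : a ≤ k)
    (q : ℂ) (hq : ‖q‖ < 1) :
    (∑' mn : ℕ × ℕ, (ubarCount 2 (2 * k) (2 * a - 1) mn.1 mn.2 : ℂ) * q ^ mn.2)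
      = (∑' mn : ℕ × ℕ, (ubarCount 2 (2 * k) (2 * a) mn.1 mn.2 : ℂ) * q ^ mn.2) ∧
    (∑' mn : ℕ × ℕ, (ubarCount 2 (2 * k) (2 * a) mn.1 mn.2 : ℂ) * q ^ mn.2)
      = qPochInf (-(q ^ 2)) (q ^ 2) ^ 2 * qPochInf (q ^ (2 * a)) (q ^ (4 * k))
        * qPochInf (q ^ (4 * k - 2 * a)) (q ^ (4 * k))
        * qPochInf (q ^ (4 * k)) (q ^ (4 * k)) / qPochInf (q ^ 2) (q ^ 2) := by
  constructor
  · simp only [ubarCount, ubarCond_two_mul_sub_one_iff ha]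
  · have hq2 : ‖q ^ 2‖ < 1 := by
      rw [norm_pow]; exact pow_lt_one₀ (norm_nonneg q) hq two_ne_zero
    obtain ⟨d, rfl⟩ := Nat.exists_eq_add_of_le hak
    have hseries : gordonSeries (q ^ 2) a d 0 = qPochInf (q ^ (2 * a)) (q ^ (4 * (a + d))) *
        qPochInf (q ^ (4 * (a + d) - 2 * a)) (q ^ (4 * (a + d))) *
        qPochInf (q ^ (4 * (a + d))) (q ^ (4 * (a + d))) := by
      have h := tsum_theta_eq_qPochInf hq2 ha d
      simp only [← pow_mul, ← mul_assoc, Nat.reduceMul] at h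
      rw [show 4 * (a + d) - 2 * a = 2 * (a + 2 * d) by omega, ← h]
      refine tsum_congr fun n => ?_
      rw [gordonTerm, add_zero, mul_inv_cancel₀ (overRatio_ne_zero hq2 n)]
      ring
    rw [tsum_ubarCount_eq hq hak, Nat.add_sub_cancel_left, hseries]
    ring
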